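/- Let f0 = sup_{k≥0} 2^{k−2^k} χ_{[0,2^{2^k})} and a(t,f0) = (1/log(1+t)) ∫_0^t f0(s) ds. Then lim_{n→∞} a(2^{2^n}, f0) = 2/log 2; consequently limsup_{t→∞} a(t,f0) ≥ 2/log 2. -/

import Mathlib

open MeasureTheory Filter Set

/-- `f0 = sup_{k ≥ 0} 2^(k - 2^k) χ_[0, 2^(2^k))`. -/
noncomputable def f0 : ℝ → ℝ := fun t =>
  ⨆ k : ℕ, if t < (2:ℝ) ^ (2 ^ k) then (2:ℝ) ^ ((k : ℤ) - 2 ^ k) else 0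

/-- `a(t, f0) = (1/log(1+t)) ∫_0^t f0(s) ds`. -/
noncomputable def aF : ℝ → ℝ := fun t => (∫ s in (0:ℝ)..t, f0 s) / Real.log (1 + t)

lemma expo_anti : Antitone (fun k : ℕ => (k : ℤ) - 2 ^ k) := by
  apply antitone_nat_of_succ_le
  intro n
  have : (1 : ℤ) ≤ 2 ^ n := one_le_pow₀ (by norm_num)
  push_cast
  rw [pow_succ]
  linarith

lemma coef_anti {m k : ℕ} (h : m ≤ k) :
    (2 : ℝ) ^ ((k : ℤ) - 2 ^ k) ≤ (2 : ℝ) ^ ((m : ℤ) - 2 ^ m) :=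
  zpow_le_zpow_right₀ (by norm_num) (expo_anti h)

lemma f0_bdd (t : ℝ) : BddAbove (range fun k : ℕ =>
    if t < (2:ℝ) ^ (2 ^ k) then (2:ℝ) ^ ((k : ℤ) - 2 ^ k) else 0) := by
  refine ⟨(2 : ℝ) ^ (((0 : ℕ) : ℤ) - 2 ^ 0), ?_⟩
  rintro _ ⟨k, rfl⟩
  dsimp only
  split_ifs
  · exact coef_anti (Nat.zero_le k)
  · positivity

lemma f0_antitone : Antitone f0 := by
  intro s t hst
  unfold f0
  apply ciSup_mono (f0_bdd s)
  intro k
  split_ifs with h1 h2 h2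
  · exact le_rfl
  · exact absurd (hst.trans_lt h1) h2
  · positivity
  · exact le_rfl

lemma f0_nonneg (t : ℝ) : 0 ≤ f0 t := by
  unfold f0
  apply Real.iSup_nonneg
  intro k
  split_ifs
  · positivity
  · exact le_rfl

lemma f0_eq (m : ℕ) (t : ℝ) (h : t < (2:ℝ) ^ (2 ^ m))
    (h' : ∀ k : ℕ, t < (2:ℝ) ^ (2 ^ k) → m ≤ k) :
    f0 t = (2:ℝ) ^ ((m : ℤ) - 2 ^ m) := by
  unfold f0
  apply le_antisymm
  · apply ciSup_le
    intro k
    split_ifs with hk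
    · exact coef_anti (h' k hk)
    · positivity
  · have := le_ciSup (f0_bdd t) m
    rwa [if_pos h] at this

lemma tower_mono {m k : ℕ} (h : m ≤ k) : (2:ℝ) ^ (2 ^ m) ≤ (2:ℝ) ^ (2 ^ k) :=
  pow_le_pow_right₀ (by norm_num) (Nat.pow_le_pow_right (by norm_num) h)

lemma int_zero : ∫ s in (0:ℝ)..(2:ℝ) ^ (2 ^ 0), f0 s = 1 := by
  rw [intervalIntegral.integral_congr_Ioo_of_le (g := fun _ => (1/2 : ℝ)) (by positivity)]
  · simp
  · intro x hx
    dsimp only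
    rw [f0_eq 0 x hx.2 (fun _ _ => Nat.zero_le _)]
    norm_num

lemma int_succ (n : ℕ) : ∫ s in (0:ℝ)..(2:ℝ) ^ (2 ^ (n+1)), f0 s =
    (∫ s in (0:ℝ)..(2:ℝ) ^ (2 ^ n), f0 s) + (2 ^ (n+1) - 2 ^ (n+1) / (2:ℝ) ^ (2 ^ n)) := by
  rw [← intervalIntegral.integral_add_adjacent_intervals
    (f0_antitone.intervalIntegrable (a := 0) (b := (2:ℝ) ^ (2 ^ n)))
    (f0_antitone.intervalIntegrable (b := (2:ℝ) ^ (2 ^ (n+1))))]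
  congr 1
  rw [intervalIntegral.integral_congr_Ioo_of_le
    (g := fun _ => (2:ℝ) ^ (((n+1 : ℕ) : ℤ) - 2 ^ (n+1))) (tower_mono (Nat.le_succ n))]
  · rw [intervalIntegral.integral_const, smul_eq_mul, zpow_sub₀ (by norm_num)]
    have e : ((2 : ℝ) ^ ((2:ℤ) ^ (n+1))) = (2:ℝ) ^ ((2:ℕ) ^ (n+1)) := by
      rw [← zpow_natCast]; push_cast; rfl
    rw [e, zpow_natCast]
    have e2 : (2:ℝ) ^ ((2:ℕ) ^ (n+1)) = (2:ℝ) ^ ((2:ℕ) ^ n) * (2:ℝ) ^ ((2:ℕ) ^ n) := by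
      rw [← pow_add, pow_succ 2 n, mul_two]
    rw [e2]
    have : (2:ℝ) ^ ((2:ℕ) ^ n) ≠ 0 := by positivity
    field_simp
  · intro x hx
    apply f0_eq _ x hx.2
    intro k hk
    by_contra hc
    have := tower_mono (show k ≤ n by omega)
    linarith [hx.1]

lemma int_bounds (n : ℕ) :
    (2:ℝ) * 2 ^ n - 1 - n ≤ ∫ s in (0:ℝ)..(2:ℝ) ^ (2 ^ n), f0 s ∧
    ∫ s in (0:ℝ)..(2:ℝ) ^ (2 ^ n), f0 s ≤ 2 * 2 ^ n := by
  induction n with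
  | zero => rw [int_zero]; norm_num
  | succ n ih =>
    rw [int_succ]
    have h0 : (0:ℝ) ≤ 2 ^ (n+1) / (2:ℝ) ^ (2 ^ n) := by positivity
    have h1 : (2:ℝ) ^ (n+1) / (2:ℝ) ^ (2 ^ n) ≤ 1 := by
      rw [div_le_one (by positivity)]
      exact pow_le_pow_right₀ (by norm_num) (Nat.lt_two_pow_self)
    have e : (2:ℝ) ^ (n+1) = 2 * 2 ^ n := by ring
    push_cast
    constructor <;> linarith [ih.1, ih.2]

lemma log_lb (n : ℕ) {t : ℝ} (h : (2:ℝ) ^ (2 ^ n) ≤ t) :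
    2 ^ n * Real.log 2 ≤ Real.log (1 + t) := by
  have h1 : (0:ℝ) < (2:ℝ) ^ (2 ^ n) := by positivity
  have := Real.log_le_log h1 (show _ ≤ 1 + t by linarith)
  rw [Real.log_pow] at this
  push_cast at this
  exact this

lemma log_ub (n : ℕ) :
    Real.log (1 + (2:ℝ) ^ (2 ^ n)) ≤ 2 ^ n * Real.log 2 + Real.log 2 := by
  have h1 : (1:ℝ) ≤ (2:ℝ) ^ (2 ^ n) := one_le_pow₀ (by norm_num)
  have := Real.log_le_log (by positivity) (show 1 + (2:ℝ) ^ (2 ^ n) ≤ (2:ℝ) ^ (2 ^ n + 1) by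
    rw [pow_succ]; linarith)
  rw [Real.log_pow] at this
  push_cast at this
  linarith

lemma aF_le {t : ℝ} (ht : 2 ≤ t) : aF t ≤ 4 / Real.log 2 := by
  have hl : 0 < Real.log 2 := Real.log_pos (by norm_num)
  have hex : ∃ n : ℕ, t < (2:ℝ) ^ (2 ^ n) := by
    obtain ⟨n, hn⟩ := pow_unbounded_of_one_lt t (show (1:ℝ) < 2 by norm_num)
    exact ⟨n, hn.trans_le (pow_le_pow_right₀ (by norm_num) (Nat.lt_two_pow_self).le)⟩
  obtain ⟨n, h1, h2⟩ : ∃ n : ℕ, (2:ℝ) ^ (2 ^ n) ≤ t ∧ t < (2:ℝ) ^ (2 ^ (n+1)) := by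
    classical
    have hs := Nat.find_spec hex
    have hm := fun m => Nat.find_min hex (m := m)
    generalize Nat.find hex = N at hs hm
    cases N with
    | zero => norm_num at hs; linarith
    | succ n => exact ⟨n, not_lt.1 (hm n (Nat.lt_succ_self n)), hs⟩
  have hi : ∫ s in (0:ℝ)..t, f0 s ≤ ∫ s in (0:ℝ)..(2:ℝ) ^ (2 ^ (n+1)), f0 s :=
    intervalIntegral.integral_mono_interval le_rfl (by linarith) h2.le
      (Eventually.of_forall f0_nonneg) f0_antitone.intervalIntegrable
  have hb := (int_bounds (n+1)).2
  have hlog := log_lb n h1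
  have hp : (0:ℝ) < 2 ^ n := by positivity
  have hpl : 0 < 2 ^ n * Real.log 2 := by positivity
  unfold aF
  rw [div_le_div_iff₀ (by linarith) hl]
  have e : (2:ℝ) ^ (n+1) = 2 * 2 ^ n := by ring
  have : ∫ s in (0:ℝ)..t, f0 s ≤ 4 * 2 ^ n := by linarith
  nlinarith [mul_le_mul_of_nonneg_right this hl.le]

lemma tend_seq : Tendsto (fun n : ℕ => aF ((2:ℝ) ^ (2 ^ n))) atTop
    (nhds (2 / Real.log 2)) := by
  have hl : 0 < Real.log 2 := Real.log_pos (by norm_num)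
  have t0 : Tendsto (fun n : ℕ => 1 / (2:ℝ) ^ n) atTop (nhds 0) := by
    simpa using tendsto_pow_const_div_const_pow_of_one_lt 0 (show (1:ℝ) < 2 by norm_num)
  have t1 : Tendsto (fun n : ℕ => (n:ℝ) / (2:ℝ) ^ n) atTop (nhds 0) := by
    simpa using tendsto_pow_const_div_const_pow_of_one_lt 1 (show (1:ℝ) < 2 by norm_num)
  have hI : Tendsto (fun n : ℕ => (∫ s in (0:ℝ)..(2:ℝ) ^ (2 ^ n), f0 s) / 2 ^ n) atTop
      (nhds 2) := by
    have hlo : Tendsto (fun n : ℕ => 2 - 1 / (2:ℝ) ^ n - (n:ℝ) / (2:ℝ) ^ n) atTop (nhds 2) := by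
      simpa using (t0.const_sub 2).sub t1
    refine tendsto_of_tendsto_of_tendsto_of_le_of_le hlo tendsto_const_nhds ?_ ?_
    · intro n
      have hp : (0:ℝ) < 2 ^ n := by positivity
      dsimp only
      rw [le_div_iff₀ hp]
      have := (int_bounds n).1
      field_simp
      linarith
    · intro n
      have hp : (0:ℝ) < 2 ^ n := by positivity
      dsimp only
      rw [div_le_iff₀ hp]
      exact (int_bounds n).2
  have hL : Tendsto (fun n : ℕ => Real.log (1 + (2:ℝ) ^ (2 ^ n)) / 2 ^ n) atTop
      (nhds (Real.log 2)) := by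
    have hhi : Tendsto (fun n : ℕ => Real.log 2 + (1 / (2:ℝ) ^ n) * Real.log 2) atTop
        (nhds (Real.log 2)) := by
      simpa using (t0.mul_const (Real.log 2)).const_add (Real.log 2)
    refine tendsto_of_tendsto_of_tendsto_of_le_of_le tendsto_const_nhds hhi ?_ ?_
    · intro n
      have hp : (0:ℝ) < 2 ^ n := by positivity
      dsimp only
      rw [le_div_iff₀ hp]
      linarith [log_lb n le_rfl]
    · intro n
      have hp : (0:ℝ) < 2 ^ n := by positivity
      dsimp only
      rw [div_le_iff₀ hp]
      have := log_ub n
      field_simp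
      linarith
  refine (hI.div hL hl.ne').congr ?_
  intro n
  have hp : (2:ℝ) ^ n ≠ 0 := by positivity
  exact div_div_div_cancel_right₀ hp _ _

/-- `a(2^(2^n), f0) → 2/log 2`; consequently `limsup_{t→∞} a(t, f0) ≥ 2/log 2`. -/
theorem avA_f0_along_subsequence :
    Filter.Tendsto (fun n : ℕ => aF ((2:ℝ) ^ (2 ^ n))) Filter.atTop
      (nhds (2 / Real.log 2)) ∧
    2 / Real.log 2 ≤ Filter.limsup aF Filter.atTop := by
  refine ⟨tend_seq, ?_⟩
  have hb : IsBoundedUnder (· ≤ ·) atTop aF :=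
    ⟨4 / Real.log 2, eventually_map.2 ((eventually_ge_atTop 2).mono fun t ht => aF_le ht)⟩
  have hu : Tendsto (fun n : ℕ => (2:ℝ) ^ (2 ^ n)) atTop atTop :=
    (tendsto_pow_atTop_atTop_of_one_lt (by norm_num)).comp
      (tendsto_pow_atTop_atTop_of_one_lt (by norm_num : 1 < 2))
  refine le_of_forall_lt fun c hc => ?_
  obtain ⟨d, hcd, hd⟩ := exists_between hc
  refine hcd.trans_le (le_limsup_of_frequently_le ?_ hb)
  apply hu.frequently
  exact ((tend_seq.eventually (lt_mem_nhds hd)).mono fun n hn => hn.le).frequently
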